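/- arXiv:2307.09581 — 2 statements merged into one kernel-verified Lean document; each statement's English description precedes it below -/
import Mathlib

section
/- Define σ_n = Σ_{k=0}^{n−1} b_k, R_n = (b_n − (2n + α + 1))/z and r_n = (a_n − σ_n)/z. Then: (i) for every n ≥ 1, r_n² = a_n·R_n·R_{n−1}; (ii) for every n ≥ 0, r_{n+1} + r_n = −(2n + 1 + α − z + z·R_n)·R_n; and (iii) for every n ≥ 1, (r_n + n)·(r_n + n + α) = a_n·(R_n − 1)·(R_{n−1} − 1). -/
open MeasureTheory intervalIntegral Polynomial

theorem tl_integrable (α z : ℝ) (hα : -1 < α) (p : Polynomial ℝ) :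
    IntervalIntegrable (fun x : ℝ => x ^ α * (p.eval x * Real.exp (-x))) volume 0 z := by
  apply IntervalIntegrable.mul_continuousOn (intervalIntegral.intervalIntegrable_rpow' hα)
  apply Continuous.continuousOn
  have := p.continuous
  fun_prop

noncomputable def tlL (α z : ℝ) (hα : -1 < α) : Polynomial ℝ →ₗ[ℝ] ℝ where
  toFun p := ∫ x in (0:ℝ)..z, x ^ α * (p.eval x * Real.exp (-x))
  map_add' p q := by
    rw [← intervalIntegral.integral_add (tl_integrable α z hα p) (tl_integrable α z hα q)]
    congr 1; ext x; simp; ring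
  map_smul' c p := by
    rw [RingHom.id_apply, smul_eq_mul, ← intervalIntegral.integral_const_mul]
    congr 1; ext x; simp; ring

theorem tl_boundary (α z : ℝ) (hα : -1 < α) (hz : 0 < z) (p : Polynomial ℝ) :
    tlL α z hα (C (α + 1) * p + X * derivative p - X * p)
      = p.eval z * (z ^ (α + 1) * Real.exp (-z)) := by
  have h := intervalIntegral.integral_eq_sub_of_hasDerivAt_of_le (a := 0) (b := z) hz.le
    (f := fun x : ℝ => p.eval x * (x ^ (α + 1) * Real.exp (-x)))
    (f' := fun x : ℝ => x ^ α *
      ((C (α + 1) * p + X * derivative p - X * p).eval x * Real.exp (-x)))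
    (by
      apply ContinuousOn.mul p.continuous.continuousOn
      apply ContinuousOn.mul
      · apply Continuous.continuousOn
        exact Real.continuous_rpow_const (by linarith)
      · fun_prop)
    (by
      intro x hx
      have h1 := p.hasDerivAt x
      have h2 := Real.hasDerivAt_rpow_const (x := x) (p := α + 1) (Or.inl hx.1.ne')
      have h3 : HasDerivAt (fun x : ℝ => Real.exp (-x)) (Real.exp (-x) * (-1)) x :=
        (hasDerivAt_neg x).exp
      refine (h1.mul (h2.mul h3)).congr_deriv ?_
      have h4 : x ^ (α + 1) = x ^ α * x := Real.rpow_add_one hx.1.ne' α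
      rw [add_sub_cancel_right]
      simp [h4]
      ring)
    (tl_integrable α z hα _)
  have h0 : (0:ℝ) ^ (α + 1) = 0 := Real.zero_rpow (by linarith)
  rw [h0] at h
  simpa [tlL] using h

theorem tl_pos (α z : ℝ) (hα : -1 < α) (hz : 0 < z) (p : Polynomial ℝ) (hp : p ≠ 0) :
    0 < tlL α z hα (p * p) := by
  change 0 < ∫ x in (0:ℝ)..z, x ^ α * ((p * p).eval x * Real.exp (-x))
  rw [intervalIntegral.integral_pos_iff_support_of_nonneg_ae' _ (tl_integrable α z hα _)]
  · refine ⟨hz, ?_⟩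
    have hfin : volume {x : ℝ | p.IsRoot x} = 0 :=
      (Polynomial.finite_setOfPred_isRoot hp).measure_zero _
    have hsub : Set.Ioo 0 z \ {x : ℝ | p.IsRoot x} ⊆
        Function.support (fun x : ℝ => x ^ α * ((p * p).eval x * Real.exp (-x))) ∩ Set.Ioc 0 z := by
      rintro x ⟨hx, hr⟩
      refine ⟨?_, hx.1, hx.2.le⟩
      have h1 : p.eval x ≠ 0 := hr
      have h2 := (Real.rpow_pos_of_pos hx.1 α).ne'
      simp [h1, h2, (Real.exp_pos _).ne']
    refine lt_of_lt_of_le ?_ (measure_mono hsub)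
    rw [measure_sdiff_null hfin]
    simp [hz]
  · rw [Set.uIoc_of_le hz.le]
    filter_upwards [ae_restrict_mem measurableSet_Ioc] with x hx
    have := Real.rpow_nonneg hx.1.le α
    have h2 := mul_self_nonneg (p.eval x)
    have h3 := (Real.exp_pos (-x)).le
    simp only [Polynomial.eval_mul, Pi.zero_apply]
    positivity

theorem tl_orth (L : Polynomial ℝ →ₗ[ℝ] ℝ) (P : ℕ → Polynomial ℝ)
    (hm : ∀ n, (P n).Monic) (hd : ∀ n, (P n).natDegree = n)
    (ho : ∀ m n, m ≠ n → L (P m * P n) = 0) (n : ℕ) :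
    ∀ d : ℕ, d ≤ n → ∀ q : Polynomial ℝ, q.degree < d → L (P n * q) = 0 := by
  intro d
  induction d with
  | zero =>
    intro _ q hq
    have : q = 0 := by simpa using hq
    simp [this]
  | succ d ih =>
    intro hdn q hq
    have h1 : (q - C (q.coeff d) * P d).degree < d := by
      rw [Polynomial.degree_lt_iff_coeff_zero] at hq ⊢
      intro k hk
      rcases Nat.eq_or_lt_of_le hk with rfl | hk
      · have := (hm d).coeff_natDegree
        rw [hd] at this
        simp [this]
      · have h2 : (P d).coeff k = 0 := Polynomial.coeff_eq_zero_of_natDegree_lt (by rw [hd]; exact hk)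
        simp [h2, hq k hk]
    have h2 := ih (by omega) _ h1
    have h3 : P n * (q - C (q.coeff d) * P d) = P n * q - (q.coeff d) • (P n * P d) := by
      rw [Polynomial.smul_eq_C_mul]; ring
    rw [h3, map_sub, map_smul, ho n d (by omega)] at h2
    simpa using h2

theorem tl_coeffXd (p : Polynomial ℝ) (k : ℕ) : (X * derivative p).coeff k = k * p.coeff k := by
  cases k with
  | zero => simp
  | succ k => rw [Polynomial.coeff_X_mul, Polynomial.coeff_derivative]; push_cast; ring

/-- Relations satisfied by the ladder-operator residues
R_n = (b_n − (2n+α+1))/z and r_n = (a_n − σ_n)/z, where σ_n = Σ_{k<n} b_k. -/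
theorem truncated_laguerre_ladder_residues (α z : ℝ) (hα : -1 < α) (hz : 0 < z)
    (P : ℕ → Polynomial ℝ)
    (hP_monic : ∀ n, (P n).Monic)
    (hP_deg : ∀ n, (P n).natDegree = n)
    (hP_orth : ∀ m n, m ≠ n →
      ∫ x in (0:ℝ)..z, (P m).eval x * (P n).eval x * x ^ α * Real.exp (-x) = 0)
    (a b : ℕ → ℝ)
    (ha0 : a 0 = 0)
    (hrec0 : Polynomial.X * P 0 = P 1 + Polynomial.C (b 0) * P 0)
    (hrec : ∀ n, 1 ≤ n →
      Polynomial.X * P n = P (n + 1) + Polynomial.C (b n) * P n + Polynomial.C (a n) * P (n - 1))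
    (σ R r : ℕ → ℝ)
    (hσ : ∀ n : ℕ, σ n = ∑ k ∈ Finset.range n, b k)
    (hR : ∀ n : ℕ, R n = (b n - (2 * (n : ℝ) + α + 1)) / z)
    (hr : ∀ n : ℕ, r n = (a n - σ n) / z) :
    (∀ n : ℕ, 1 ≤ n → (r n) ^ 2 = a n * R n * R (n - 1)) ∧
    (∀ n : ℕ, r (n + 1) + r n = -((2 * (n : ℝ) + 1 + α - z + z * R n) * R n)) ∧
    (∀ n : ℕ, 1 ≤ n →
      (r n + (n : ℝ)) * (r n + (n : ℝ) + α) = a n * (R n - 1) * (R (n - 1) - 1)) := by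
  have hcm : ∀ n, (P n).coeff n = 1 := fun n => by
    have := (hP_monic n).coeff_natDegree
    rwa [hP_deg] at this
  have hcz : ∀ n k, n < k → (P n).coeff k = 0 := fun n k h =>
    Polynomial.coeff_eq_zero_of_natDegree_lt (by rw [hP_deg]; exact h)
  have hdegP : ∀ n, (P n).degree = n := fun n => by
    rw [Polynomial.degree_eq_natDegree (hP_monic n).ne_zero, hP_deg]
  have hzne := hz.ne'
  obtain ⟨L, hLdef⟩ : ∃ L, L = tlL α z hα := ⟨_, rfl⟩
  have ho : ∀ m n, m ≠ n → L (P m * P n) = 0 := by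
    intro m n hmn
    rw [hLdef, ← hP_orth m n hmn]
    change ∫ x in (0:ℝ)..z, x ^ α * ((P m * P n).eval x * Real.exp (-x)) = _
    congr 1; ext x; simp; ring
  have horth := tl_orth L P hP_monic hP_deg ho
  have hbd : ∀ p : Polynomial ℝ, L (C (α + 1) * p + X * derivative p - X * p)
      = p.eval z * (z ^ (α + 1) * Real.exp (-z)) := by
    rw [hLdef]; exact tl_boundary α z hα hz
  have hpos : ∀ n, 0 < L (P n * P n) := fun n => by
    rw [hLdef]; exact tl_pos α z hα hz _ (hP_monic n).ne_zero
  have hCL : ∀ (c : ℝ) (p : Polynomial ℝ), L (C c * p) = c * L p := fun c p => by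
    rw [← Polynomial.smul_eq_C_mul, map_smul, smul_eq_mul]
  clear hLdef
  have hbd : ∀ p : Polynomial ℝ, (α + 1) * L p + L (X * derivative p) - L (X * p)
      = p.eval z * (z ^ (α + 1) * Real.exp (-z)) := fun p => by
    rw [← hCL, ← map_add, ← map_sub]; exact hbd p
  obtain ⟨h, hh⟩ : ∃ h : ℕ → ℝ, ∀ n, L (P n * P n) = h n := ⟨_, fun _ => rfl⟩
  have hne : ∀ n, h n ≠ 0 := fun n => by rw [← hh]; exact (hpos n).ne'
  have hrecs : ∀ n, X * P (n+1) = P (n+2) + C (b (n+1)) * P (n+1) + C (a (n+1)) * P n :=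
    fun n => hrec (n+1) (by omega)
  -- norms
  have hXP : ∀ n, L (X * (P (n+1) * P n)) = h (n+1) := by
    intro n
    have h1 := horth (n+1) (n+1) le_rfl (X * P n - P (n+1)) (by
      rw [Polynomial.degree_lt_iff_coeff_zero]
      intro k hk
      obtain ⟨k, rfl⟩ : ∃ j, k = j + 1 := ⟨k - 1, by omega⟩
      rw [Polynomial.coeff_sub, Polynomial.coeff_X_mul]
      rcases Nat.eq_or_lt_of_le hk with hk | hk
      · obtain rfl : n = k := by omega
        simp [hcm]
      · rw [hcz _ _ (by omega), hcz _ _ hk]; simp)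
    rw [show P (n+1) * (X * P n - P (n+1)) = X * (P (n+1) * P n) - P (n+1) * P (n+1) by ring,
      map_sub, hh] at h1
    linarith
  have hah : ∀ n, h (n+1) = a (n+1) * h n := by
    intro n
    rw [← hXP n, show X * (P (n+1) * P n) = (X * P (n+1)) * P n by ring, hrecs n,
      show (P (n+2) + C (b (n+1)) * P (n+1) + C (a (n+1)) * P n) * P n =
        P (n+2) * P n + C (b (n+1)) * (P (n+1) * P n) + C (a (n+1)) * (P n * P n) by ring,
      map_add, map_add, hCL, hCL, ho _ _ (by omega), ho _ _ (by omega), hh]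
    ring
  have hbh : ∀ n, L (X * (P n * P n)) = b n * h n := by
    intro n
    cases n with
    | zero =>
      rw [← mul_assoc, hrec0, add_mul, mul_assoc, map_add, hCL, ho _ _ (by omega), hh]; ring
    | succ n =>
      rw [← mul_assoc, hrecs n, add_mul, add_mul, mul_assoc, mul_assoc, map_add, map_add, hCL, hCL,
        ho (n+2) _ (by omega), ho n _ (by omega), hh]
      ring
  have hsub : ∀ n, (P (n+1)).coeff n = - σ (n+1) := by
    intro n
    induction n with
    | zero =>
      have h1 := congrArg (fun p => Polynomial.coeff p 0) hrec0
      simp [hcm 0] at h1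
      rw [hσ]
      simp
      linarith
    | succ n ih =>
      have h1 := congrArg (fun p => Polynomial.coeff p (n+1)) (hrecs n)
      simp only [Polynomial.coeff_X_mul, Polynomial.coeff_add, Polynomial.coeff_C_mul, hcm,
        hcz n (n+1) (by omega)] at h1
      rw [hσ, Finset.sum_range_succ, ← hσ]
      rw [ih] at h1
      linarith
  -- residues
  obtain ⟨w, hw⟩ : ∃ w, w = z ^ (α + 1) * Real.exp (-z) := ⟨_, rfl⟩
  rw [← hw] at hbd
  obtain ⟨v, hv⟩ : ∃ v : ℕ → ℝ, ∀ n, (P n).eval z = v n := ⟨_, fun _ => rfl⟩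
  have hRv : ∀ n, z * R n * h n = - (v n * v n * w) := by
    intro n
    have h1 := hbd (P n * P n)
    have h2 := horth n n le_rfl (X * derivative (P n) - C (n:ℝ) * P n) (by
      rw [Polynomial.degree_lt_iff_coeff_zero]
      intro k hk
      rw [Polynomial.coeff_sub, tl_coeffXd, Polynomial.coeff_C_mul]
      rcases Nat.eq_or_lt_of_le hk with rfl | hk
      · ring
      · rw [hcz _ _ hk]; ring)
    rw [show P n * (X * derivative (P n) - C (n:ℝ) * P n) =
      P n * (X * derivative (P n)) - C (n:ℝ) * (P n * P n) by ring, map_sub, hCL, hh] at h2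
    rw [show X * derivative (P n * P n) =
      P n * (X * derivative (P n)) + P n * (X * derivative (P n)) by rw [Polynomial.derivative_mul]; ring,
      map_add, hh, hbh, Polynomial.eval_mul, hv] at h1
    rw [hR]
    field_simp
    linarith
  have hrv : ∀ n, z * r (n+1) * h n = - (v (n+1) * v n * w) := by
    intro n
    have h1 := hbd (P (n+1) * P n)
    have h2 := horth n n le_rfl (X * derivative (P (n+1)) - C ((n:ℝ)+1) * P (n+1)
        - C (σ (n+1)) * P n) (by
      rw [Polynomial.degree_lt_iff_coeff_zero]
      intro k hk
      rw [Polynomial.coeff_sub, Polynomial.coeff_sub, tl_coeffXd, Polynomial.coeff_C_mul,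
        Polynomial.coeff_C_mul]
      rcases Nat.eq_or_lt_of_le hk with rfl | hk
      · rw [hsub, hcm]; ring
      · rw [hcz _ _ hk]
        rcases Nat.eq_or_lt_of_le hk with rfl | hk
        · push_cast; ring
        · rw [hcz _ _ hk]; ring)
    have h3 := horth (n+1) (n+1) le_rfl (X * derivative (P n)) (by
      rw [Polynomial.degree_lt_iff_coeff_zero]
      intro k hk
      rw [tl_coeffXd, hcz _ _ (by omega)]; ring)
    rw [show P n * (X * derivative (P (n+1)) - C ((n:ℝ)+1) * P (n+1) - C (σ (n+1)) * P n) =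
      P n * (X * derivative (P (n+1))) - C ((n:ℝ)+1) * (P n * P (n+1))
        - C (σ (n+1)) * (P n * P n) by ring, map_sub, map_sub, hCL, hCL, hh,
      ho n (n+1) (by omega)] at h2
    rw [show X * derivative (P (n+1) * P n) =
      P n * (X * derivative (P (n+1))) + P (n+1) * (X * derivative (P n)) by rw [Polynomial.derivative_mul]; ring,
      map_add, hXP, ho (n+1) n (by omega), Polynomial.eval_mul, hv, hv,
      h3, hah] at h1
    rw [hr]
    field_simp
    linarith
  have hvrec : ∀ n, z * v (n+1) = v (n+2) + b (n+1) * v (n+1) + a (n+1) * v n := by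
    intro n
    have := congrArg (Polynomial.eval z) (hrecs n)
    simpa [hv] using this
  have hvrec0 : z * v 0 = v 1 + b 0 * v 0 := by
    have := congrArg (Polynomial.eval z) hrec0
    simpa [hv] using this
  have hr0 : r 0 = 0 := by rw [hr, hσ, ha0]; simp
  have hbR : ∀ n, b n = 2 * (n:ℝ) + α + 1 + z * R n := by
    intro n; rw [hR]; field_simp; ring
  have hi : ∀ n, (r (n+1))^2 = a (n+1) * R (n+1) * R n := by
    intro n
    have e1 := hrv n
    have e2 := hRv n
    have e3 := hRv (n+1)
    rw [hah] at e3
    have : (z * h n)^2 * (r (n+1))^2 = (z * h n)^2 * (a (n+1) * R (n+1) * R n) := by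
      calc _ = (z * r (n+1) * h n)^2 := by ring
        _ = (v (n+1) * v (n+1) * w) * (v n * v n * w) := by rw [e1]; ring
        _ = (z * R (n+1) * (a (n+1) * h n)) * (z * R n * h n) := by rw [e2, e3]; ring
        _ = _ := by ring
    exact mul_left_cancel₀ (pow_ne_zero 2 (mul_ne_zero hzne (hne n))) this
  have hrv' : ∀ n, z * r (n+1) * h (n+1) = - (v (n+1) * v n * w) * a (n+1) := by
    intro n; rw [hah, ← hrv n]; ring
  have hii : ∀ n, r (n+1) + r n = (z - b n) * R n := by
    intro n
    apply mul_left_cancel₀ (mul_ne_zero hzne (hne n))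
    have e1 := hrv n
    have e2 := hRv n
    cases n with
    | zero =>
      rw [hr0]
      linear_combination e1 - (z - b 0) * e2 + w * v 0 * hvrec0
    | succ n =>
      linear_combination e1 + hrv' n - (z - b (n+1)) * e2 + w * v (n+1) * hvrec n
  have hd0 : z * r 1 = a 1 - b 0 := by rw [hr, hσ]; field_simp; simp
  have hd : ∀ n, z * (r (n+1) - r n) = a (n+1) - a n - b n := by
    intro n
    rw [hr, hr, hσ, Finset.sum_range_succ, ← hσ]; field_simp; ring
  have hRv' : ∀ n, z * (a (n+1) * R (n+1)) * h n = - (v (n+1) * v (n+1) * w) := by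
    intro n; rw [← hRv (n+1), hah]; ring
  have hRv'' : ∀ n, z * R n * h (n+1) = - (v n * v n * w) * a (n+1) := by
    intro n; rw [← hRv n, hah]; ring
  have hF : ∀ n : ℕ, (2 * (n:ℝ) + α) * r n + n * (n + α) = a n * (1 - R n - R (n-1)) := by
    intro n
    induction n with
    | zero => simp [hr0, ha0]
    | succ n ih =>
      have s2 : (z - b n) * (r (n+1) - r n) = a (n+1) * R (n+1) - a n * R (n-1) := by
        apply mul_left_cancel₀ (mul_ne_zero hzne (hne n))
        cases n with
        | zero =>
          rw [hr0, ha0]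
          linear_combination (z - b 0) * hrv 0 - hRv' 0 - w * v 1 * hvrec0
        | succ n =>
          simp only [Nat.add_sub_cancel]
          linear_combination (z - b (n+1)) * (hrv (n+1) - hrv' n) - hRv' (n+1)
            + a (n+1) * hRv'' n - w * (v (n+2) - a (n+1) * v n) * hvrec n
      simp only [Nat.add_sub_cancel]
      push_cast
      linear_combination ih + hii n - s2 + (1 - R n) * hd n - (r (n+1) - r n + 1) * hbR n
  refine ⟨?_, ?_, ?_⟩
  · intro n hn
    obtain ⟨n, rfl⟩ : ∃ j, n = j + 1 := ⟨n - 1, by omega⟩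
    exact hi n
  · intro n
    rw [hii, hbR]; ring
  · intro n hn
    obtain ⟨n, rfl⟩ : ∃ j, n = j + 1 := ⟨n - 1, by omega⟩
    have e1 := hi n
    have e2 := hF (n+1)
    simp only [Nat.add_sub_cancel] at e2 ⊢
    linear_combination e1 + e2
end

section
/- Let x_1 < x_2 < ⋯ < x_{n+1} be the zeros of P_{n+1}(·; z), assumed to be n+1 distinct real numbers lying in the open interval (0, z), and set β_n = −b_{n+1} + (2n + α + z + 3). Then the zeros satisfy the electrostatic equilibrium equations: for every k with 1 ≤ k ≤ n+1, Σ_{j≠k} 2/(x_j − x_k) − 1/(x_k − z) − 1/x_k + 1/(x_k − β_n) + 1 − α/x_k = 0. -/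
open MeasureTheory intervalIntegral Polynomial

noncomputable def ellF (α z : ℝ) (p : ℝ[X]) : ℝ :=
  ∫ x in (0:ℝ)..z, p.eval x * (x ^ α * Real.exp (-x))

theorem ellF_int (α z : ℝ) (hα : -1 < α) (p : ℝ[X]) :
    IntervalIntegrable (fun x => p.eval x * (x ^ α * Real.exp (-x))) volume 0 z := by
  have h1 : IntervalIntegrable (fun x : ℝ => x ^ α) volume 0 z :=
    intervalIntegral.intervalIntegrable_rpow' hα
  have h2 := h1.mul_continuousOn (g := fun x => Real.exp (-x)) (by fun_prop)
  exact h2.continuousOn_mul (g := fun x => p.eval x) (by fun_prop)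

theorem ellF_add (α z : ℝ) (hα : -1 < α) (p q : ℝ[X]) :
    ellF α z (p + q) = ellF α z p + ellF α z q := by
  unfold ellF
  rw [← intervalIntegral.integral_add (ellF_int α z hα p) (ellF_int α z hα q)]
  congr 1; ext x; simp; ring

theorem ellF_C (α z : ℝ) (c : ℝ) (q : ℝ[X]) :
    ellF α z (C c * q) = c * ellF α z q := by
  unfold ellF
  rw [← intervalIntegral.integral_const_mul]
  congr 1; ext x; simp; ring

theorem ellF_zero (α z : ℝ) : ellF α z 0 = 0 := by
  simp [ellF]

theorem ellF_sub (α z : ℝ) (hα : -1 < α) (p q : ℝ[X]) :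
    ellF α z (p - q) = ellF α z p - ellF α z q := by
  have : p - q = p + C (-1) * q := by simp; ring
  rw [this, ellF_add α z hα, ellF_C]; ring

theorem ellF_pos (α z : ℝ) (hα : -1 < α) (hz : 0 < z) (p : ℝ[X]) (h : ellF α z (p * p) = 0) :
    p = 0 := by
  by_contra hp
  have hroots : (p.rootSet ℝ).Finite := Polynomial.rootSet_finite p ℝ
  have hnn : ∀ x ∈ Set.Ioc (0:ℝ) z, 0 ≤ (p * p).eval x * (x ^ α * Real.exp (-x)) := by
    intro x hx
    have := Real.rpow_pos_of_pos hx.1 α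
    have := Real.exp_pos (-x)
    rw [eval_mul]
    exact mul_nonneg (mul_self_nonneg _) (by positivity)
  have h0 : 0 ≤ᵐ[volume.restrict (Set.Ioc 0 z)]
      fun x => (p * p).eval x * (x ^ α * Real.exp (-x)) := by
    filter_upwards [ae_restrict_mem measurableSet_Ioc] with x hx using hnn x hx
  have := (intervalIntegral.integral_eq_zero_iff_of_le_of_nonneg_ae hz.le h0
    (ellF_int α z hα (p * p))).1 h
  have hsub : ∀ᵐ x ∂(volume.restrict (Set.Ioc 0 z)), x ∈ p.rootSet ℝ := by
    filter_upwards [this, ae_restrict_mem measurableSet_Ioc] with x hx hm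
    have h1 := Real.rpow_pos_of_pos hm.1 α
    have h2 := Real.exp_pos (-x)
    rw [Polynomial.mem_rootSet]
    refine ⟨hp, ?_⟩
    have : (p * p).eval x * (x ^ α * Real.exp (-x)) = 0 := hx
    rw [eval_mul] at this
    have h3 : (x ^ α * Real.exp (-x)) ≠ 0 := by positivity
    have := (mul_eq_zero.1 this).resolve_right h3
    simpa using this
  have hno : ∀ᵐ x ∂(volume.restrict (Set.Ioc 0 z)), x ∉ p.rootSet ℝ :=
    ae_restrict_of_ae (hroots.countable.ae_notMem volume)
  have hf : ∀ᵐ x ∂(volume.restrict (Set.Ioc 0 z)), False := by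
    filter_upwards [hsub, hno] with x h1 h2 using h2 h1
  rw [Filter.eventually_false_iff_eq_bot, ae_eq_bot, Measure.restrict_eq_zero] at hf
  simp at hf
  linarith

noncomputable def sgm (z : ℝ) : ℝ[X] := X * X - C z * X
noncomputable def tauu (α z : ℝ) : ℝ[X] := C (2 + α + z) * X - X * X - C (z * (1 + α))

theorem ellF_ibp (α z : ℝ) (hα : -1 < α) (hz : 0 < z) (p : ℝ[X]) :
    ellF α z (sgm z * derivative p + tauu α z * p) = 0 := by
  unfold ellF
  have key := intervalIntegral.integral_eq_sub_of_hasDerivAt_of_le (a := 0) (b := z) hz.le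
    (f := fun x => (x - z) * x ^ (α + 1) * Real.exp (-x) * p.eval x)
    (f' := fun x => (sgm z * derivative p + tauu α z * p).eval x * (x ^ α * Real.exp (-x)))
    ?_ ?_ (ellF_int α z hα _)
  · rw [key]
    simp [Real.zero_rpow (by linarith : α + 1 ≠ 0)]
  · have : Continuous fun x : ℝ => x ^ (α + 1) := Real.continuous_rpow_const (by linarith)
    fun_prop
  · intro x hx
    have h1 : HasDerivAt (fun x : ℝ => x ^ (α + 1)) ((α + 1) * x ^ α) x := by
      simpa using Real.hasDerivAt_rpow_const (x := x) (p := α + 1) (Or.inl hx.1.ne')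
    have h2 : HasDerivAt (fun x : ℝ => Real.exp (-x)) (-Real.exp (-x)) x := by
      simpa using (hasDerivAt_neg x).exp
    have h3 := ((((hasDerivAt_id x).sub_const z).mul h1).mul h2).mul (p.hasDerivAt x)
    refine h3.congr_deriv ?_
    have : x ^ (α + 1) = x ^ α * x := by
      rw [Real.rpow_add hx.1, Real.rpow_one]
    simp [sgm, tauu, this]
    ring

theorem sgm_coeff (z : ℝ) (q : ℝ[X]) (i : ℕ) :
    (sgm z * derivative q).coeff (i + 1) = i * q.coeff i - z * (i + 1) * q.coeff (i + 1) := by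
  have : sgm z * derivative q = X * (X * derivative q) - C z * (X * derivative q) := by
    unfold sgm; ring
  rw [this, coeff_sub, coeff_C_mul, coeff_X_mul, coeff_X_mul]
  cases i with
  | zero => simp [coeff_derivative]
  | succ i => rw [coeff_X_mul]; simp [coeff_derivative]; ring

noncomputable def LL (α z : ℝ) (q : ℝ[X]) : ℝ[X] :=
  sgm z * derivative (derivative q) + tauu α z * derivative q

theorem LL_coeff (α z : ℝ) (q : ℝ[X]) (i : ℕ) :
    (LL α z q).coeff (i + 1) = (i + 1) * i * q.coeff (i + 1)
      - z * (i + 2) * (i + 1) * q.coeff (i + 2) - i * q.coeff i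
      + (2 + α + z) * (i + 1) * q.coeff (i + 1) - z * (1 + α) * (i + 2) * q.coeff (i + 2) := by
  have : tauu α z * derivative q = C (2 + α + z) * (X * derivative q) - X * (X * derivative q)
      - C (z * (1 + α)) * derivative q := by
    unfold tauu; ring
  rw [LL, coeff_add, sgm_coeff, this, coeff_sub, coeff_sub, coeff_C_mul, coeff_C_mul,
    coeff_X_mul, coeff_X_mul]
  cases i with
  | zero => simp [coeff_derivative]; ring
  | succ i => rw [coeff_X_mul]; simp [coeff_derivative]; ring

theorem ellF_symm (α z : ℝ) (hα : -1 < α) (hz : 0 < z) (p q : ℝ[X]) :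
    ellF α z (LL α z p * q) = ellF α z (p * LL α z q) := by
  have h1 := ellF_ibp α z hα hz (derivative p * q)
  have h2 := ellF_ibp α z hα hz (p * derivative q)
  have e : LL α z p * q - p * LL α z q =
    (sgm z * derivative (derivative p * q) + tauu α z * (derivative p * q)) -
    (sgm z * derivative (p * derivative q) + tauu α z * (p * derivative q)) := by
    simp only [LL, derivative_mul]; ring
  have := congrArg (ellF α z) e
  rw [ellF_sub α z hα, ellF_sub α z hα, h1, h2] at this
  linarith

theorem orth_aux (α z : ℝ) (hα : -1 < α) (P : ℕ → ℝ[X])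
    (hm : ∀ n, (P n).Monic) (hd : ∀ n, (P n).natDegree = n)
    (D : ℝ[X]) (m : ℕ) (h : ∀ j < m, ellF α z (D * P j) = 0) :
    ∀ q : ℝ[X], (∀ i, m ≤ i → q.coeff i = 0) → ellF α z (D * q) = 0 := by
  induction m with
  | zero =>
    intro q hq
    have : q = 0 := by ext i; simpa using hq i (Nat.zero_le _)
    simp [this, ellF_zero]
  | succ m ih =>
    intro q hq
    have e : D * q = C (q.coeff m) * (D * P m) + D * (q - C (q.coeff m) * P m) := by ring
    rw [e, ellF_add α z hα, ellF_C, h m (Nat.lt_succ_self m),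
      ih (fun j hj => h j (hj.trans (Nat.lt_succ_self m)))]
    · simp
    · intro i hi
      rcases hi.eq_or_lt with rfl | hi
      · have : (P m).coeff m = 1 := by simpa [Monic, leadingCoeff, hd m] using hm m
        simp [this]
      · have : (P m).coeff i = 0 := coeff_eq_zero_of_natDegree_lt (by rw [hd]; exact hi)
        simp [this, hq i hi]

theorem exists_and_split {p q : ℝ[X] → Prop} (h1 : ∃ A, p A) (h2 : ∃ B, q B) :
    ∃ A B, p A ∧ q B := by
  obtain ⟨A, hA⟩ := h1
  obtain ⟨B, hB⟩ := h2
  exact ⟨A, B, hA, hB⟩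

theorem main_aux (α z : ℝ) (hα : -1 < α) (hz : 0 < z)
    (P : ℕ → Polynomial ℝ)
    (hm : ∀ n, (P n).Monic)
    (hd : ∀ n, (P n).natDegree = n)
    (horth : ∀ m n, m ≠ n → ellF α z (P m * P n) = 0)
    (a b : ℝ) (n : ℕ)
    (hrec : X * P (n + 1) = P (n + 2) + C b * P (n + 1) + C a * P n) :
    ∃ A B : ℝ[X],
      sgm z * derivative (P (n + 1)) =
        C a * (X - C (-b + (2 * (n : ℝ) + α + z + 3))) * P n + A * P (n + 1) ∧
      LL α z (P (n + 1)) = C a * P n + B * P (n + 1) := by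
  have hc1 : ∀ m, (P m).coeff m = 1 := fun m => by
    simpa [Monic, leadingCoeff, hd m] using hm m
  have hc0 : ∀ m i, m < i → (P m).coeff i = 0 := fun m i h =>
    coeff_eq_zero_of_natDegree_lt (by rw [hd]; exact h)
  have ho : ∀ m (q : ℝ[X]), (∀ i, m ≤ i → q.coeff i = 0) → ellF α z (P m * q) = 0 := fun m =>
    orth_aux α z hα P hm hd (P m) m (fun j hj => horth m j hj.ne')
  have hA : ∀ m (s : ℝ[X]), (∀ i, m < i → s.coeff i = 0) →
      ellF α z (P m * s) = s.coeff m * ellF α z (P m * P m) := by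
    intro m s hs
    have e : P m * s = C (s.coeff m) * (P m * P m) + P m * (s - C (s.coeff m) * P m) := by ring
    rw [e, ellF_add α z hα, ellF_C, ho m (s - C (s.coeff m) * P m)]
    · simp
    · intro i hi
      rcases hi.eq_or_lt with rfl | hi
      · simp [hc1]
      · simp [hc0 m i hi, hs i hi]
  have hB : ∀ m (G : ℝ[X]), (∀ i, m < i → G.coeff i = 0) →
      (∀ q : ℝ[X], (∀ i, m ≤ i → q.coeff i = 0) → ellF α z (G * q) = 0) →
      G = C (G.coeff m) * P m := by
    intro m G hG hq
    have hr : ∀ i, m ≤ i → (G - C (G.coeff m) * P m).coeff i = 0 := by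
      intro i hi
      rcases hi.eq_or_lt with rfl | hi
      · simp [hc1]
      · simp [hc0 m i hi, hG i hi]
    rw [← sub_eq_zero]
    apply ellF_pos α z hα hz
    have h1 := hq _ hr
    have h2 := ho m _ hr
    generalize hrr : G - C (G.coeff m) * P m = r at *
    rw [show r * r = G * r - C (G.coeff m) * (P m * r) by rw [← hrr]; ring, ellF_sub α z hα,
      ellF_C, h1, h2]
    simp
  have hXc : ∀ m (q : ℝ[X]), (∀ i, m ≤ i → q.coeff i = 0) →
      ∀ i, m < i → (X * q).coeff i = 0 := by
    intro m q hq i hi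
    obtain ⟨i, rfl⟩ : ∃ j, i = j + 1 := ⟨i - 1, by omega⟩
    rw [coeff_X_mul]; exact hq i (by omega)
  have ha : ellF α z (P (n + 1) * P (n + 1)) = a * ellF α z (P n * P n) := by
    have h1 := hA (n + 1) (X * P n) (hXc _ _ (fun i hi => hc0 n i (by omega)))
    rw [coeff_X_mul, hc1, one_mul] at h1
    rw [← h1]
    rw [show P (n + 1) * (X * P n) = P (n+2) * P n + C b * (P (n+1) * P n) + C a * (P n * P n) by
      linear_combination P n * hrec]
    rw [ellF_add α z hα, ellF_add α z hα, ellF_C, ellF_C, horth _ _ (by omega),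
      horth _ _ (by omega)]
    ring
  set H := ellF α z (P (n + 1) * P (n + 1)) with hH
  set β := -b + (2 * (n : ℝ) + α + z + 3) with hβ
  refine exists_and_split ?_ ?_
  · have := hB (n + 1) (sgm z * derivative (P (n + 1)) - C a * (X - C β) * P n
      - C (n + 1 : ℝ) * X * P (n + 1)) ?_ ?_
    · generalize coeff (_ : ℝ[X]) _ = c at this
      exact ⟨C (n + 1 : ℝ) * X + C c, by linear_combination this⟩
    · intro i hi
      obtain ⟨i, rfl⟩ : ∃ j, i = j + 1 := ⟨i - 1, by omega⟩
      rw [show C a * (X - C β) * P n = C a * (X * P n) - C (a * β) * P n by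
        rw [C_mul]; ring, mul_assoc, coeff_sub, coeff_sub, sgm_coeff, coeff_sub, coeff_C_mul,
        coeff_C_mul, coeff_C_mul, coeff_X_mul, coeff_X_mul, hc0 (n+1) (i+1) (by omega),
        hc0 n i (by omega), hc0 n (i+1) (by omega)]
      rcases (show n + 1 ≤ i by omega).eq_or_lt with rfl | h
      · push_cast; ring
      · rw [hc0 (n+1) i h]; ring
    · intro q hq
      have h1 := ellF_ibp α z hα hz (P (n + 1) * q)
      have e : (sgm z * derivative (P (n + 1)) - C a * (X - C β) * P n
          - C (n + 1 : ℝ) * X * P (n + 1)) * q =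
          (sgm z * derivative (P (n + 1) * q) + tauu α z * (P (n + 1) * q))
          - P (n + 1) * (sgm z * derivative q)
          + P (n + 2) * (X * q) + C b * (P (n + 1) * (X * q))
          - C (2 + α + z) * (P (n + 1) * (X * q))
          + C (z * (1 + α)) * (P (n + 1) * q)
          + C (a * β) * (P n * q)
          - C (n + 1 : ℝ) * (P (n + 1) * (X * q)) := by
        rw [derivative_mul, tauu, C_mul (a := a)]
        linear_combination (X * q) * hrec
      rw [e]
      simp only [ellF_add α z hα, ellF_sub α z hα, ellF_C] at h1 ⊢
      rw [h1, hA (n + 1) (X * q) (hXc _ _ hq), ho (n + 1) q hq,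
        hA n q (fun i hi => hq i hi), ho (n + 2) (X * q) (fun i hi => hXc _ _ hq i (by omega)),
        hA (n + 1) (sgm z * derivative q), sgm_coeff, coeff_X_mul, hq (n + 1) le_rfl, ← hH]
      · rw [hβ]
        linear_combination -(q.coeff n) * (-b + (2 * (n : ℝ) + α + z + 3)) * ha
      · intro i hi
        obtain ⟨i, rfl⟩ : ∃ j, i = j + 1 := ⟨i - 1, by omega⟩
        rw [sgm_coeff, hq _ (by omega), hq _ (by omega)]; simp
  · have := hB (n + 1) (LL α z (P (n + 1)) - C a * P n
      + C (n + 1 : ℝ) * (X * P (n + 1))) ?_ ?_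
    · generalize coeff (_ : ℝ[X]) _ = c at this
      exact ⟨- (C (n + 1 : ℝ) * X) + C c, by linear_combination this⟩
    · intro i hi
      obtain ⟨i, rfl⟩ : ∃ j, i = j + 1 := ⟨i - 1, by omega⟩
      rw [coeff_add, coeff_sub, LL_coeff, coeff_C_mul, coeff_C_mul, coeff_X_mul,
        hc0 (n+1) (i+1) (by omega), hc0 (n+1) (i+2) (by omega), hc0 n (i+1) (by omega)]
      rcases (show n + 1 ≤ i by omega).eq_or_lt with rfl | h
      · push_cast; ring
      · rw [hc0 (n+1) i h]; ring
    · intro q hq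
      have e : (LL α z (P (n + 1)) - C a * P n + C (n + 1 : ℝ) * (X * P (n + 1))) * q =
        LL α z (P (n + 1)) * q - C a * (P n * q) + C (n + 1 : ℝ) * (P (n + 1) * (X * q)) := by
        ring
      rw [e, ellF_add α z hα, ellF_sub α z hα, ellF_C, ellF_C, ellF_symm α z hα hz,
        hA (n + 1) (X * q) (hXc _ _ hq), hA n q (fun i hi => hq i hi),
        hA (n + 1) (LL α z q), LL_coeff, coeff_X_mul, hq (n + 1) le_rfl,
        hq (n + 2) (by omega), ← hH]
      · linear_combination (q.coeff n) * ha
      · intro i hi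
        obtain ⟨i, rfl⟩ : ∃ j, i = j + 1 := ⟨i - 1, by omega⟩
        rw [LL_coeff, hq _ (by omega), hq _ (by omega), hq _ (by omega)]; simp

theorem logder_prod {ι : Type*} [DecidableEq ι] (s : Finset ι) (f : ι → ℝ) (x : ℝ)
    (h : ∀ j ∈ s, x - f j ≠ 0) :
    (derivative (∏ j ∈ s, (X - C (f j)))).eval x =
      (∏ j ∈ s, (X - C (f j))).eval x * ∑ j ∈ s, 1 / (x - f j) := by
  induction s using Finset.induction_on with
  | empty => simp
  | insert i s hi ih =>
    have h1 := h i (Finset.mem_insert_self _ _)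
    rw [Finset.prod_insert hi, Finset.sum_insert hi, derivative_mul, eval_add, eval_mul, eval_mul,
      eval_mul, ih (fun j hj => h j (Finset.mem_insert_of_mem hj))]
    simp
    field_simp

/-- Electrostatic equilibrium equations for the zeros of the truncated Laguerre
polynomial P_{n+1}(·;z). -/
theorem truncated_laguerre_zeros_electrostatic (α z : ℝ) (hα : -1 < α) (hz : 0 < z)
    (P : ℕ → Polynomial ℝ)
    (hP_monic : ∀ n, (P n).Monic)
    (hP_deg : ∀ n, (P n).natDegree = n)
    (hP_orth : ∀ m n, m ≠ n →
      ∫ x in (0:ℝ)..z, (P m).eval x * (P n).eval x * x ^ α * Real.exp (-x) = 0)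
    (a b : ℕ → ℝ)
    (ha0 : a 0 = 0)
    (hrec0 : Polynomial.X * P 0 = P 1 + Polynomial.C (b 0) * P 0)
    (hrec : ∀ n, 1 ≤ n →
      Polynomial.X * P n = P (n + 1) + Polynomial.C (b n) * P n + Polynomial.C (a n) * P (n - 1))
    (n : ℕ) (xs : Fin (n + 1) → ℝ)
    (hx_mono : StrictMono xs)
    (hx_mem : ∀ k, xs k ∈ Set.Ioo (0 : ℝ) z)
    (hx_zeros : P (n + 1) = ∏ k, (Polynomial.X - Polynomial.C (xs k))) :
    ∀ k : Fin (n + 1),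
      (∑ j ∈ Finset.univ.erase k, 2 / (xs j - xs k))
        - 1 / (xs k - z) - 1 / xs k
        + 1 / (xs k - (-(b (n + 1)) + (2 * (n : ℝ) + α + z + 3)))
        + 1 - α / xs k = 0 := by
  intro k
  have horth : ∀ m n, m ≠ n → ellF α z (P m * P n) = 0 := by
    intro m n hmn
    rw [← hP_orth m n hmn, ellF]
    congr 1; ext x; rw [eval_mul]; ring
  obtain ⟨A, B, h1, h2⟩ := main_aux α z hα hz P hP_monic hP_deg horth (a (n + 1)) (b (n + 1)) n
    (by simpa using hrec (n + 1) (by omega))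
  set β := -(b (n + 1)) + (2 * (n : ℝ) + α + z + 3) with hβ
  obtain ⟨hx0, hxz⟩ := hx_mem k
  have hne : ∀ j ∈ Finset.univ.erase k, xs k - xs j ≠ 0 := by
    intro j hj
    rw [sub_ne_zero]
    exact fun h => (Finset.ne_of_mem_erase hj) (hx_mono.injective h).symm
  have hl := logder_prod (Finset.univ.erase k) xs (xs k) hne
  have hP : P (n + 1) = (X - C (xs k)) * ∏ j ∈ Finset.univ.erase k, (X - C (xs j)) := by
    rw [hx_zeros, Finset.mul_prod_erase _ (fun j => X - C (xs j)) (Finset.mem_univ k)]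
  have hQ0 : (∏ j ∈ Finset.univ.erase k, (X - C (xs j))).eval (xs k) ≠ 0 := by
    rw [eval_prod, Finset.prod_ne_zero_iff]
    intro j hj
    simpa using hne j hj
  have hS : ∑ j ∈ Finset.univ.erase k, 2 / (xs j - xs k) =
      -2 * ∑ j ∈ Finset.univ.erase k, 1 / (xs k - xs j) := by
    rw [Finset.mul_sum]
    refine Finset.sum_congr rfl fun j hj => ?_
    rw [← neg_sub (xs k) (xs j), div_neg]; ring
  rw [hS]
  generalize (∏ j ∈ Finset.univ.erase k, (X - C (xs j))) = Q at *
  generalize (∑ j ∈ Finset.univ.erase k, 1 / (xs k - xs j)) = S at *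
  have e0 : (P (n + 1)).eval (xs k) = 0 := by rw [hP]; simp
  have e1 : (derivative (P (n + 1))).eval (xs k) = Q.eval (xs k) := by rw [hP]; simp
  have e2 : (derivative (derivative (P (n + 1)))).eval (xs k) = 2 * (Q.eval (xs k) * S) := by
    rw [hP, ← hl]; simp; ring
  have h1' := congrArg (eval (xs k)) h1
  have h2' := congrArg (eval (xs k)) h2
  simp only [LL, sgm, tauu, eval_add, eval_mul, eval_sub, eval_X, eval_C, e0, e1, e2] at h1' h2'
  generalize eval (xs k) Q = Q0 at *
  generalize xs k = x at *
  have hx : x ≠ 0 := hx0.ne'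
  have hxz' : x - z ≠ 0 := (sub_neg.2 hxz).ne
  have hxb : x - β ≠ 0 := by
    intro h
    rw [h] at h1'
    have : x * (x - z) * Q0 = 0 := by linear_combination h1'
    exact (mul_ne_zero (mul_ne_zero hx hxz') hQ0) this
  field_simp
  apply mul_left_cancel₀ hQ0
  linear_combination h1' - (x - β) * h2'
end
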